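/- Let α > 0, assume M = max_{1 ≤ j ≤ N} M_j < ∞, fix j* with M_{j*} = M, and, for β > 0, let F(β) denote the β-branching number of (b̄^{j*}, k̄^{j*}, γ̄^{j*}). Then for every real β ≥ α and every k ∈ ℕ with k ≥ 1: inf_{R∈𝓡} Pr_{R,Γ}(S^{βk, k}) ≤ (βk + 1)^{r+1} · exp(−F(β)·k). -/

import Mathlib

/-!
The constant rules mapping `R = jstar` already satisfies the bound, by the method of types.
Under it, words using letters outside the group `jstar` have probability zero. For a
first-passage word `l` of length `n` inside the group, let `q` be its empirical distribution.
As `mu l ≤ β k ≤ β * kap l`, the vector `q` is feasible for the `β`-branching problem, so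
`n * KL q γ ≥ F(β) * kap l ≥ F(β) * k`, and the `γ`-probability of `l` is `exp (-n * KL q γ)` times
its `q`-probability (`wordP_le`). The `q`-probabilities of the words of a given type sum to at
most `1` (`sum_prod_le`), and since every letter costs at least `1` there are at most
`(β k + 1) ^ r` types.
-/

open scoped Classical

noncomputable section

namespace RB

/-- The alphabet `𝒳`, given as the disjoint union of the groups `𝒳_j`. -/
abbrev X (N : ℕ) (r : Fin N → ℕ) : Type := (j : Fin N) × Fin (r j)

variable {N : ℕ} {r : Fin N → ℕ}

/-- the coverage `κ` of a word (`K` is the concatenation of the `k̄ʲ`) -/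
def kap (K : (j : Fin N) → Fin (r j) → ℕ) (l : List (X N r)) : ℕ :=
  (l.map fun a => K a.1 a.2).sum

/-- the cost `μ` of a word (`B` is the concatenation of the `b̄ʲ`) -/
def mu (B : (j : Fin N) → Fin (r j) → ℕ) (l : List (X N r)) : ℕ :=
  (l.map fun a => B a.1 a.2).sum

/-- `P_{R,Υ}(ā) = ∏_ℓ [Υ_{a_ℓ}` if `a_ℓ ∈ 𝒳_{R(a_1,…,a_{ℓ-1})}`, else `0]` -/
def wordP (R : List (X N r) → Fin N) (Υ : (j : Fin N) → Fin (r j) → ℝ)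
    (l : List (X N r)) : ℝ :=
  ∏ ℓ : Fin l.length,
    if (l.get ℓ).1 = R (l.take ℓ.1) then Υ (l.get ℓ).1 (l.get ℓ).2 else 0

/-- the set of words `A^{b,k}` -/
def ASet (B K : (j : Fin N) → Fin (r j) → ℕ) (bb kb : ℝ) : Set (List (X N r)) :=
  if bb < 0 then ∅
  else if kb ≤ 0 then {[]}
  else {l | l ≠ [] ∧ (mu B l : ℝ) ≤ bb ∧ kb ≤ (kap K l : ℝ) ∧ (kap K l.dropLast : ℝ) < kb}

/-- `Pr_{R,Υ}(S^{b,k}) = Σ_{ā ∈ A^{b,k}} P_{R,Υ}(ā)` (the set `A^{b,k}` is finite,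
so the `tsum` is the finite sum) -/
def PrS (B K : (j : Fin N) → Fin (r j) → ℕ) (R : List (X N r) → Fin N)
    (Υ : (j : Fin N) → Fin (r j) → ℝ) (bb kb : ℝ) : ℝ :=
  ∑' l : ASet B K bb kb, wordP R Υ l.1

/-- `k`-consistent rules mappings: whenever `κ(ā) < k`, every `i ∈ 𝒳_{R(ā)}`
satisfies `K_i ≤ k - κ(ā)`. -/
def Consistent (K : (j : Fin N) → Fin (r j) → ℕ) (k : ℕ)
    (R : List (X N r) → Fin N) : Prop :=
  ∀ l : List (X N r), kap K l < k → ∀ i : Fin (r (R l)), K (R l) i + kap K l ≤ k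

/-- Kullback-Leibler divergence -/
def KL {ρ : ℕ} (q g : Fin ρ → ℝ) : ℝ := ∑ i, q i * Real.log (q i / g i)

/-- the set of values of the `α`-branching optimization problem -/
def BrSet (α : ℝ) {ρ : ℕ} (bv kv : Fin ρ → ℕ) (g : Fin ρ → ℝ) : Set ℝ :=
  {x | ∃ q : Fin ρ → ℝ, (∀ i, 0 ≤ q i) ∧ (∑ i, q i = 1) ∧
        (∑ i, q i * (bv i : ℝ)) ≤ α * ∑ i, q i * (kv i : ℝ) ∧
        x = KL q g / ∑ i, q i * (kv i : ℝ)}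

end RB

namespace RB

/-! ### Words as products over letter counts -/

lemma wordP_const {N : ℕ} {r : Fin N → ℕ} (γ : (j : Fin N) → Fin (r j) → ℝ) (j : Fin N)
    (l : List (X N r)) :
    wordP (fun _ => j) γ l = (l.map fun a => if a.1 = j then γ a.1 a.2 else 0).prod := by
  unfold wordP
  conv_rhs => rw [← List.ofFn_get l, List.map_ofFn, List.prod_ofFn]
  rfl

lemma prod_map_eq {ι : Type*} [Fintype ι] [DecidableEq ι] (l : List ι) (f : ι → ℝ) :
    (l.map f).prod = ∏ a, f a ^ l.count a := by
  rw [Finset.prod_list_map_count]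
  refine Finset.prod_subset (Finset.subset_univ _) fun a _ ha => ?_
  rw [List.count_eq_zero_of_not_mem (by simpa using ha), pow_zero]

lemma sum_map_eq {ι : Type*} [Fintype ι] [DecidableEq ι] (l : List ι) (f : ι → ℕ) :
    (l.map f).sum = ∑ a, l.count a * f a := by
  rw [Finset.sum_list_map_count]
  simp only [smul_eq_mul]
  refine Finset.sum_subset (Finset.subset_univ _) fun a _ ha => ?_
  rw [List.count_eq_zero_of_not_mem (by simpa using ha), zero_mul]

/-- Under independent letters of law `q`, the probabilities of distinct words of a common length
`n` sum to at most `1`. -/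
lemma sum_prod_le {ι : Type*} [Fintype ι] (S : Finset (List ι)) (n : ℕ)
    (hS : ∀ l ∈ S, l.length = n) (q : ι → ℝ) (hq : ∀ a, 0 ≤ q a) (hq1 : ∑ a, q a = 1) :
    ∑ l ∈ S, (l.map q).prod ≤ 1 := by
  have hsub : S ⊆ Finset.univ.image (fun f : Fin n → ι => List.ofFn f) := by
    intro l hl
    obtain rfl := hS l hl
    exact Finset.mem_image.2 ⟨l.get, Finset.mem_univ _, List.ofFn_get l⟩
  calc ∑ l ∈ S, (l.map q).prod
      ≤ ∑ l ∈ Finset.univ.image (fun f : Fin n → ι => List.ofFn f), (l.map q).prod := by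
        refine Finset.sum_le_sum_of_subset_of_nonneg hsub fun l _ _ => ?_
        refine List.prod_nonneg fun x hx => ?_
        obtain ⟨a, -, rfl⟩ := List.mem_map.1 hx
        exact hq a
    _ = ∑ f : Fin n → ι, ∏ i, q (f i) := by
        rw [Finset.sum_image (fun a _ b _ h => List.ofFn_injective h)]
        simp [List.map_ofFn, List.prod_ofFn]
    _ = 1 := by
        rw [← Fintype.sum_pow, hq1, one_pow]

/-! ### Nonnegativity of the branching number -/

/-- The Gibbs inequality, from `log x ≥ 1 - 1 / x` applied termwise. -/
lemma KL_nonneg {ρ : ℕ} (q g : Fin ρ → ℝ) (hq : ∀ i, 0 ≤ q i) (hg : ∀ i, 0 < g i)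
    (hq1 : ∑ i, q i = 1) (hg1 : ∑ i, g i = 1) : 0 ≤ KL q g := by
  have h : ∑ i, (q i - g i) ≤ KL q g := by
    refine Finset.sum_le_sum fun i _ => ?_
    rcases (hq i).eq_or_lt with h0 | h0
    · simp [← h0, (hg i).le]
    · have h1 := Real.one_sub_inv_le_log_of_pos (div_pos h0 (hg i))
      have h2 := mul_le_mul_of_nonneg_left h1 h0.le
      have h3 : q i * (1 - (q i / g i)⁻¹) = q i - g i := by
        field_simp
      linarith
  rw [Finset.sum_sub_distrib, hq1, hg1] at h
  linarith

lemma BrSet_nonneg {ρ : ℕ} (β : ℝ) (b k : Fin ρ → ℕ) (g : Fin ρ → ℝ) (hg : ∀ i, 0 < g i)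
    (hg1 : ∑ i, g i = 1) : ∀ x ∈ BrSet β b k g, 0 ≤ x := by
  rintro x ⟨q, hq, hq1, -, rfl⟩
  exact div_nonneg (KL_nonneg q g hq hg hq1 hg1)
    (Finset.sum_nonneg fun i _ => mul_nonneg (hq i) (Nat.cast_nonneg _))

/-! ### Empirical distributions and change of measure -/

/-- The empirical distribution of a word, `0` on every letter for the empty word. -/
def emp {ι : Type*} [DecidableEq ι] (l : List ι) (a : ι) : ℝ := (l.count a : ℝ) / (l.length : ℝ)

lemma emp_nonneg {ι : Type*} [DecidableEq ι] (l : List ι) (a : ι) : 0 ≤ emp l a := by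
  unfold emp; positivity

lemma sum_emp {ι : Type*} [Fintype ι] [DecidableEq ι] (l : List ι) (hl : l ≠ []) : ∑ a, emp l a = 1 := by
  have h := sum_map_eq l (fun _ => 1)
  simp only [List.map_const', List.sum_replicate, smul_eq_mul, mul_one] at h
  have hn : (l.length : ℝ) ≠ 0 := by
    simpa using hl
  unfold emp
  rw [← Finset.sum_div, ← Nat.cast_sum, ← h, div_self hn]

/-- Change of measure: the `γ`-probability of a word covering at least `k` at cost at most `β k`
is at most `exp (-F(β) k)` times its probability under its own empirical distribution. -/
lemma wordP_le {N : ℕ} {r : Fin N → ℕ} (bb kb : (j : Fin N) → Fin (r j) → ℕ)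
    (hbb : ∀ j i, 1 ≤ bb j i) (γ : (j : Fin N) → Fin (r j) → ℝ)
    (hγpos : ∀ j i, 0 < γ j i) (hγsum : ∀ j, ∑ i, γ j i = 1) (β : ℝ) (hβ : 0 < β)
    (j : Fin N) (k : ℕ) (l : List (X N r)) (hl : l ≠ [])
    (hmu : (mu bb l : ℝ) ≤ β * k) (hkap : (k : ℝ) ≤ kap kb l) :
    wordP (fun _ => j) γ l ≤
      Real.exp (-(sInf (BrSet β (bb j) (kb j) (γ j))) * k) * (l.map (emp l)).prod := by
  set F := sInf (BrSet β (bb j) (kb j) (γ j)) with hF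
  have hn : (0 : ℝ) < l.length := by
    exact_mod_cast List.length_pos_iff.2 hl
  rw [wordP_const, prod_map_eq, prod_map_eq]
  by_cases hsupp : ∀ a : X N r, a.1 ≠ j → l.count a = 0
  swap
  · -- a letter outside the group `j` makes the left-hand side vanish
    push Not at hsupp
    obtain ⟨a, ha, hc⟩ := hsupp
    rw [Finset.prod_eq_zero (Finset.mem_univ a) (by rw [if_neg ha, zero_pow hc])]
    exact mul_nonneg (Real.exp_pos _).le
      (Finset.prod_nonneg fun a _ => pow_nonneg (emp_nonneg l a) _)
  -- sums and products over all letters reduce to the group `j`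
  have hred : ∀ f : X N r → ℝ, (∀ a, a.1 ≠ j → f a = 0) → ∑ a, f a = ∑ i, f ⟨j, i⟩ := by
    intro f hf
    rw [Fintype.sum_sigma]
    exact Fintype.sum_eq_single j fun x hx => Finset.sum_eq_zero fun i _ => hf _ hx
  have hredp : ∀ f : X N r → ℝ, (∀ a, a.1 ≠ j → f a = 1) → ∏ a, f a = ∏ i, f ⟨j, i⟩ := by
    intro f hf
    rw [Fintype.prod_sigma]
    exact Fintype.prod_eq_single j fun x hx => Finset.prod_eq_one fun i _ => hf _ hx
  set q : Fin (r j) → ℝ := fun i => emp l ⟨j, i⟩ with hq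
  have hnq : ∀ i, (l.length : ℝ) * q i = l.count (⟨j, i⟩ : X N r) := by
    intro i
    simp only [hq, emp]
    field_simp
  have hq0 : ∀ i, 0 ≤ q i := fun i => emp_nonneg l _
  have hq1 : ∑ i, q i = 1 := by
    rw [← sum_emp l hl, hred]
    intro a ha
    simp [emp, hsupp a ha]
  have hlin : ∀ f : (j : Fin N) → Fin (r j) → ℕ,
      (((l.map fun a => f a.1 a.2).sum : ℕ) : ℝ) = l.length * ∑ i, q i * (f j i : ℝ) := by
    intro f
    rw [sum_map_eq, Nat.cast_sum, hred, Finset.mul_sum]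
    · refine Finset.sum_congr rfl fun i _ => ?_
      rw [← mul_assoc, hnq, Nat.cast_mul]
    · intro a ha
      simp [hsupp a ha]
  have hmu' : (mu bb l : ℝ) = l.length * ∑ i, q i * (bb j i : ℝ) := hlin bb
  have hkap' : (kap kb l : ℝ) = l.length * ∑ i, q i * (kb j i : ℝ) := hlin kb
  have hfeas : ∑ i, q i * (bb j i : ℝ) ≤ β * ∑ i, q i * (kb j i : ℝ) := by
    refine le_of_mul_le_mul_left ?_ hn
    calc _ = (mu bb l : ℝ) := hmu'.symm
      _ ≤ β * kap kb l := hmu.trans (mul_le_mul_of_nonneg_left hkap hβ.le)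
      _ = _ := by rw [hkap']; ring
  have hb1 : 1 ≤ ∑ i, q i * (bb j i : ℝ) := by
    rw [← hq1]
    refine Finset.sum_le_sum fun i _ => le_mul_of_one_le_right (hq0 i) ?_
    exact_mod_cast hbb j i
  have hk0 : 0 < ∑ i, q i * (kb j i : ℝ) := by
    by_contra hneg
    have := mul_nonpos_of_nonneg_of_nonpos hβ.le (not_lt.1 hneg)
    linarith
  have hnn := BrSet_nonneg β (bb j) (kb j) (γ j) (hγpos j) (hγsum j)
  have hF0 : 0 ≤ F := Real.sInf_nonneg hnn
  have hFle : F ≤ KL q (γ j) / ∑ i, q i * (kb j i : ℝ) :=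
    csInf_le ⟨0, hnn⟩ ⟨q, hq0, hq1, hfeas, rfl⟩
  rw [le_div_iff₀ hk0] at hFle
  have hKL : F * k ≤ l.length * KL q (γ j) :=
    calc F * k ≤ F * kap kb l := mul_le_mul_of_nonneg_left hkap hF0
      _ = l.length * (F * ∑ i, q i * (kb j i : ℝ)) := by rw [hkap']; ring
      _ ≤ _ := mul_le_mul_of_nonneg_left hFle hn.le
  have hchange : (∏ a : X N r, (if a.1 = j then γ a.1 a.2 else 0) ^ l.count a) =
      Real.exp (-(l.length * KL q (γ j))) * ∏ a : X N r, emp l a ^ l.count a := by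
    rw [hredp, hredp, KL, Finset.mul_sum, ← Finset.sum_neg_distrib, Real.exp_sum,
      ← Finset.prod_mul_distrib]
    · refine Finset.prod_congr rfl fun i _ => ?_
      rw [if_pos rfl, ← mul_assoc, hnq]
      rcases Nat.eq_zero_or_pos (l.count (⟨j, i⟩ : X N r)) with h0 | h0
      · simp [h0]
      · have hqi : 0 < q i := by
          simp only [hq, emp]; positivity
        change _ = _ * q i ^ _
        rw [← mul_neg, ← Real.log_inv, Real.exp_nat_mul,
          Real.exp_log (inv_pos.2 (div_pos hqi (hγpos j i))), ← mul_pow]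
        congr 1
        field_simp
    · intro a ha
      simp [hsupp a ha]
    · intro a ha
      simp [hsupp a ha]
  rw [hchange]
  refine mul_le_mul_of_nonneg_right (Real.exp_le_exp.2 (by linarith))
    (Finset.prod_nonneg fun a _ => pow_nonneg (emp_nonneg l a) _)

/-! ### Counting types and summing -/

lemma length_le_mu {N : ℕ} {r : Fin N → ℕ} (bb : (j : Fin N) → Fin (r j) → ℕ)
    (hbb : ∀ j i, 1 ≤ bb j i) (l : List (X N r)) : l.length ≤ mu bb l := by
  induction l with
  | nil => simp
  | cons a l ih =>
    have := hbb a.1 a.2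
    simp only [mu, List.map_cons, List.sum_cons, List.length_cons] at ih ⊢
    omega

lemma wordP_nonneg {N : ℕ} {r : Fin N → ℕ} (R : List (X N r) → Fin N)
    (γ : (j : Fin N) → Fin (r j) → ℝ) (hγ : ∀ j i, 0 < γ j i) (l : List (X N r)) :
    0 ≤ wordP R γ l := by
  refine Finset.prod_nonneg fun i _ => ?_
  split_ifs
  exacts [(hγ _ _).le, le_rfl]

end RB

/-- Lemma 11, `upper_beta`.  `jstar` is an index attaining
`M = max_j M_j` (where `M_j = sInf (BrSet α (b̄ʲ) (k̄ʲ) (γ̄ʲ))` is the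
`α`-branching number, finite by `hfeas`), and `F(β)` is the `β`-branching number
of the `jstar` term.  For every `β ≥ α` and `k ≥ 1`:
`inf_{R∈𝓡} Pr_{R,Γ}(S^{βk,k}) ≤ (βk+1)^{r+1} · exp(-F(β)·k)`,
where `r = Σ_j r_j`. -/
theorem stmt_12
    (N : ℕ) (hN : 1 ≤ N) (r : Fin N → ℕ) (hr : ∀ j, 1 ≤ r j)
    (bb kb : (j : Fin N) → Fin (r j) → ℕ)
    (hbb : ∀ j i, 1 ≤ bb j i)
    (γ : (j : Fin N) → Fin (r j) → ℝ)
    (hγpos : ∀ j i, 0 < γ j i) (hγsum : ∀ j, ∑ i, γ j i = 1)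
    (α : ℝ) (hα : 0 < α)
    (hfeas : ∀ j, (RB.BrSet α (bb j) (kb j) (γ j)).Nonempty)
    (jstar : Fin N)
    (hjstar : sInf (RB.BrSet α (bb jstar) (kb jstar) (γ jstar)) =
      ⨆ j, sInf (RB.BrSet α (bb j) (kb j) (γ j))) :
    ∀ β : ℝ, α ≤ β → ∀ k : ℕ, 1 ≤ k →
      sInf {x | ∃ R : List (RB.X N r) → Fin N,
          x = RB.PrS bb kb R γ (β * (k : ℝ)) (k : ℝ)} ≤
        (β * (k : ℝ) + 1) ^ ((∑ j, r j) + 1) *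
          Real.exp (-(sInf (RB.BrSet β (bb jstar) (kb jstar) (γ jstar))) * (k : ℝ)) := by
  intro β hαβ k hk
  have hβ : 0 < β := hα.trans_le hαβ
  have hβk : 0 ≤ β * (k : ℝ) := by positivity
  have hk0 : (0 : ℝ) < k := by exact_mod_cast hk
  have hbdd : BddBelow {x | ∃ R : List (RB.X N r) → Fin N,
      x = RB.PrS bb kb R γ (β * (k : ℝ)) (k : ℝ)} := by
    refine ⟨0, ?_⟩
    rintro x ⟨R, rfl⟩
    exact tsum_nonneg fun l => RB.wordP_nonneg R γ hγpos l.1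
  refine (csInf_le hbdd ⟨fun _ => jstar, rfl⟩).trans ?_
  have hA : ∀ l ∈ RB.ASet bb kb (β * (k : ℝ)) (k : ℝ),
      l ≠ [] ∧ (RB.mu bb l : ℝ) ≤ β * k ∧ (k : ℝ) ≤ RB.kap kb l := by
    intro l hl
    rw [RB.ASet, if_neg (not_lt.2 hβk), if_neg (not_le.2 hk0)] at hl
    exact ⟨hl.1, hl.2.1, hl.2.2.1⟩
  set m := ⌊β * (k : ℝ)⌋₊ with hm
  have hlen : ∀ l ∈ RB.ASet bb kb (β * (k : ℝ)) (k : ℝ), l.length ≤ m := fun l hl =>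
    (RB.length_le_mu bb hbb l).trans (Nat.le_floor (hA l hl).2.1)
  have hfin : (RB.ASet bb kb (β * (k : ℝ)) (k : ℝ)).Finite :=
    (List.finite_length_le (RB.X N r) m).subset hlen
  set E := Real.exp (-(sInf (RB.BrSet β (bb jstar) (kb jstar) (γ jstar))) * (k : ℝ)) with hE
  have hsum : RB.PrS bb kb (fun _ => jstar) γ (β * (k : ℝ)) (k : ℝ) =
      ∑ l ∈ hfin.toFinset, RB.wordP (fun _ => jstar) γ l := by
    rw [RB.PrS, ← Finset.tsum_subtype', hfin.coe_toFinset]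
  let typ : List (RB.X N r) → (RB.X N r → ℕ) := fun l a => l.count a
  -- the words of one type have total probability at most `E`
  have hclass : ∀ c ∈ hfin.toFinset.image typ,
      ∑ l ∈ hfin.toFinset with typ l = c, RB.wordP (fun _ => jstar) γ l ≤ E := by
    intro c hc
    obtain ⟨l₀, hl₀, rfl⟩ := Finset.mem_image.1 hc
    have hlen_eq : ∀ l, typ l = typ l₀ → l.length = l₀.length := by
      intro l h
      exact (List.perm_iff_count.2 fun a => congrFun h a).length_eq
    have hemp : ∀ l, typ l = typ l₀ → RB.emp l = RB.emp l₀ := by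
      intro l h
      funext a
      have : l.count a = l₀.count a := congrFun h a
      simp only [RB.emp, this, hlen_eq l h]
    calc _ ≤ ∑ l ∈ hfin.toFinset with typ l = typ l₀, E * (l.map (RB.emp l₀)).prod := by
          refine Finset.sum_le_sum fun l hl => ?_
          rw [Finset.mem_filter, Set.Finite.mem_toFinset] at hl
          obtain ⟨h1, h2, h3⟩ := hA l hl.1
          rw [← hemp l hl.2]
          exact RB.wordP_le bb kb hbb γ hγpos hγsum β hβ jstar k l h1 h2 h3
      _ ≤ E * 1 := by
          rw [← Finset.mul_sum]
          refine mul_le_mul_of_nonneg_left ?_ (Real.exp_pos _).le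
          refine RB.sum_prod_le _ l₀.length
            (fun l hl => hlen_eq l (Finset.mem_filter.1 hl).2) _ (RB.emp_nonneg l₀) ?_
          exact RB.sum_emp l₀ (hA l₀ (hfin.mem_toFinset.1 hl₀)).1
      _ = E := mul_one E
  have hcard : (hfin.toFinset.image typ).card ≤ (m + 1) ^ (∑ j, r j) := by
    calc _ ≤ (Fintype.piFinset fun _ : RB.X N r => Finset.range (m + 1)).card := by
          refine Finset.card_le_card fun c hc => ?_
          obtain ⟨l, hl, rfl⟩ := Finset.mem_image.1 hc
          refine Fintype.mem_piFinset.2 fun a => Finset.mem_range_succ_iff.2 ?_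
          exact List.count_le_length.trans (hlen l (hfin.mem_toFinset.1 hl))
      _ = _ := by simp
  have hcardR : ((hfin.toFinset.image typ).card : ℝ) ≤ (β * (k : ℝ) + 1) ^ ((∑ j, r j) + 1) :=
    calc ((hfin.toFinset.image typ).card : ℝ) ≤ ((m : ℝ) + 1) ^ (∑ j, r j) := by
          exact_mod_cast hcard
      _ ≤ (β * (k : ℝ) + 1) ^ (∑ j, r j) := by
          gcongr
          exact Nat.floor_le hβk
      _ ≤ _ := pow_le_pow_right₀ (by linarith) (Nat.le_succ _)
  rw [hsum, ← Finset.sum_fiberwise_of_maps_to (t := hfin.toFinset.image typ) (g := typ)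
    (fun l hl => Finset.mem_image_of_mem _ hl)]
  refine (Finset.sum_le_card_nsmul _ _ E hclass).trans ?_
  rw [nsmul_eq_mul]
  exact mul_le_mul_of_nonneg_right hcardR (Real.exp_pos _).le
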